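/- Let H(q,q^{h−1}) be a normalized generalized Hadamard matrix over 𝔽_q, with q > 2 and h ≥ 1, and set r = rank(C_H) and k = ker(C_H). Then: (i) if k = 1, then h+2 ≤ r ≤ ⌊q^h/2⌋; (ii) if 2 ≤ k ≤ h, then h+2 ≤ r ≤ k + q^{h+1−k} − 1; (iii) if k = h+1, then r = h+1. -/

import Mathlib

open Finset

/-- `H` is a generalized Hadamard matrix with parameter `lam`: for every pair of
distinct rows, the multiset of coordinatewise differences contains every element
of `F` exactly `lam` times. -/
def IsGH {F : Type*} [Fintype F] [DecidableEq F] [Sub F]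
    {ι : Type*} [Fintype ι] (lam : ℕ) (H : Matrix ι ι F) : Prop :=
  ∀ i j : ι, i ≠ j → ∀ a : F,
    (Finset.univ.filter (fun s => H i s - H j s = a)).card = lam

/-- A matrix is normalized if its first row and first column are all zeros. -/
def Normalized {F : Type*} [Zero F] {n : ℕ} (H : Matrix (Fin n) (Fin n) F) : Prop :=
  ∀ i s : Fin n, (i.val = 0 ∨ s.val = 0) → H i s = 0

/-- The code `F_H` whose codewords are the rows of `H`. -/
def rowSet {F ι : Type*} (H : Matrix ι ι F) : Set (ι → F) :=
  Set.range (fun i => H i)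

/-- The GH code `C_H = ⋃_{α ∈ F} (F_H + α·𝟏)`. -/
def ghCode {F ι : Type*} [Add F] (H : Matrix ι ι F) : Set (ι → F) :=
  {v | ∃ (α : F) (i : ι), v = fun s => H i s + α}

/-- The rank of a code: the dimension of its linear span. -/
noncomputable def rankC {F ι : Type*} [Field F] (C : Set (ι → F)) : ℕ :=
  Module.finrank F (Submodule.span F C)

/-- The kernel `K(C) = {x : αx + C = C for all α}` of a code. -/
def kerSet {F ι : Type*} [Mul F] [Add F] (C : Set (ι → F)) : Set (ι → F) :=
  {x | ∀ α : F, (fun c => (fun i => α * x i) + c) '' C = C}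

/-- The dimension of the kernel of a code. -/
noncomputable def kerDim {F ι : Type*} [Field F] (C : Set (ι → F)) : ℕ :=
  Module.finrank F (Submodule.span F (kerSet C))

/-- The `p`-kernel `K_p(C) = {x : x + C = C}` of a code. -/
def pKerSet {F ι : Type*} [Add F] (C : Set (ι → F)) : Set (ι → F) :=
  {x | (fun c => x + c) '' C = C}

/-- The Euclidean orthogonal code `C^⊥`. -/
def dualSet {F ι : Type*} [CommRing F] [Fintype ι] (C : Set (ι → F)) : Set (ι → F) :=
  {v | ∀ w ∈ C, ∑ i, v i * w i = 0}

/-- Two matrices are translation equivalent if the rows of one are obtained from the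
rows of the other by adding a fixed vector. -/
def TransEquiv {F ι : Type*} [Add F] (B B' : Matrix ι ι F) : Prop :=
  ∃ v : ι → F, rowSet B' = (fun b => v + b) '' rowSet B

/-- The Kronecker sum `H₁ ⊕ H₂`. -/
def kroneckerSum {F ι κ : Type*} [Add F] (H₁ : Matrix ι ι F) (H₂ : Matrix κ κ F) :
    Matrix (ι × κ) (ι × κ) F :=
  fun p r => H₁ p.1 r.1 + H₂ p.2 r.2

/-- The Kronecker sum `H₁ ⊕ [B₁, …, Bₙ]`, whose `(i,j)` block is `h_{ij} + B_i`. -/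
def kroneckerSumFam {F ι κ : Type*} [Add F] (H₁ : Matrix ι ι F) (B : ι → Matrix κ κ F) :
    Matrix (ι × κ) (ι × κ) F :=
  fun p r => H₁ p.1 r.1 + B p.1 p.2 r.2

/-- The multiplicative-table matrix `S_q` of a field. -/
def mulTable (F : Type*) [Mul F] : Matrix F F F := fun i j => i * j

/-- A code is `K`-additive, for a subfield `K`, if it is a linear space over `K`. -/
def IsAdditiveOver {F ι : Type*} [Field F] (K : Subfield F) (C : Set (ι → F)) : Prop :=
  (0 : ι → F) ∈ C ∧ (∀ x ∈ C, ∀ y ∈ C, x + y ∈ C) ∧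
    ∀ (a : K), ∀ x ∈ C, (fun i => (a : F) * x i) ∈ C

section EquiValued

variable {F ι : Type*} [Field F] [Fintype F] [DecidableEq F] [Fintype ι]

/-- The vector `w` takes every value of `F` exactly `lam` times. -/
def EquiValued (lam : ℕ) (w : ι → F) : Prop :=
  ∀ a : F, #{s | w s = a} = lam

omit [Field F] [Fintype F] in
theorem EquiValued.map_eq {lam : ℕ} {w w' : ι → F} (hw : EquiValued lam w)
    (hw' : EquiValued lam w') :
    (univ : Finset ι).val.map w = univ.val.map w' := by
  ext a
  rw [Multiset.count_map, Multiset.count_map]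
  have h1 := hw a
  have h2 := hw' a
  simp only [card_def, filter_val] at h1 h2
  simp only [eq_comm (a := a), h1, h2]

omit [Fintype F] in
theorem EquiValued.const_mul {lam : ℕ} {w : ι → F} (hw : EquiValued lam w) {c : F} (hc : c ≠ 0) :
    EquiValued lam (fun s => c * w s) := by
  intro a
  rw [← hw (c⁻¹ * a)]
  congr 1
  ext s
  simp only [mem_filter_univ]
  rw [eq_inv_mul_iff_mul_eq₀ hc]

theorem EquiValued.sum_eq {lam : ℕ} {w : ι → F} (hw : EquiValued lam w) (g : F → F) :
    ∑ s, g (w s) = lam * ∑ a, g a := by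
  classical
  rw [← sum_fiberwise_of_maps_to (g := w) (t := univ) (fun _ _ => mem_univ _), mul_sum]
  refine sum_congr rfl fun a _ => ?_
  rw [sum_congr rfl (g := fun _ => g a) (by intro x hx; rw [(mem_filter.1 hx).2]), sum_const,
    hw a, nsmul_eq_mul]

theorem EquiValued.sum_eq_zero {lam : ℕ} {w : ι → F} (hw : EquiValued lam w)
    (hq : 2 < Fintype.card F) : ∑ s, w s = 0 := by
  have h := FiniteField.sum_pow_lt_card_sub_one F 1 (by omega)
  simp only [pow_one] at h
  simpa only [id, h, mul_zero] using hw.sum_eq id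

theorem esymm_two_cons {R : Type*} [CommRing R] (a : R) (s : Multiset R) :
    (a ::ₘ s).esymm 2 = s.esymm 2 + a * s.sum := by
  simp [Multiset.esymm, Multiset.powersetCard_cons, Multiset.powersetCard_one]
  exact Multiset.sum_map_mul_left (s := s) (f := id) |>.trans (by simp)

theorem esymm_two_add {R κ : Type*} [CommRing R] (S : Finset κ) (u v : κ → R) :
    (S.val.map fun s => u s + v s).esymm 2 = (S.val.map u).esymm 2 + (S.val.map v).esymm 2 +
      (∑ s ∈ S, u s) * (∑ s ∈ S, v s) - ∑ s ∈ S, u s * v s := by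
  classical
  induction S using Finset.induction_on with
  | empty => simp [Multiset.esymm, Multiset.powersetCard_zero_right]
  | insert a S ha ih =>
    simp only [insert_val_of_notMem ha, Multiset.map_cons, esymm_two_cons, ih, sum_insert ha]
    simp only [← Finset.sum_eq_multiset_sum, sum_add_distrib]
    ring

theorem EquiValued.sum_mul_self_eq_zero {lam : ℕ} {w : ι → F} (hw : EquiValued lam w)
    (hlam : (lam : F) = 0 ∨ 3 < Fintype.card F) :
    ∑ s, w s * w s = 0 := by
  rcases hlam with hlam | hlam
  · simpa [hlam] using hw.sum_eq fun a => a * a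
  · have h := FiniteField.sum_pow_lt_card_sub_one F 2 (by omega)
    simp only [← sq, hw.sum_eq fun a => a ^ 2, h, mul_zero]

theorem EquiValued.esymm_two_eq_zero {lam : ℕ} {w : ι → F} (hw : EquiValued lam w)
    (hq : 2 < Fintype.card F) (hlam : (lam : F) = 0 ∨ 3 < Fintype.card F) :
    ((univ : Finset ι).val.map w).esymm 2 = 0 := by
  rcases Nat.lt_or_ge 3 (Fintype.card F) with h3 | h3
  · obtain ⟨c, -, hc⟩ := exists_mem_notMem_of_card_lt_card
      (s := ({0, 1, -1} : Finset F)) (t := univ) (card_le_three.trans_lt h3)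
    simp only [mem_insert, mem_singleton, not_or] at hc
    have h := Multiset.pow_smul_esymm c 2 ((univ : Finset ι).val.map w)
    rw [Multiset.map_map] at h
    have h' := (hw.const_mul hc.1).map_eq hw
    simp only [Function.comp_def, smul_eq_mul] at h
    rw [h'] at h
    have h0 : (c - 1) * (c + 1) * ((univ : Finset ι).val.map w).esymm 2 = 0 := by
      linear_combination h
    refine (mul_eq_zero.1 h0).resolve_left (mul_ne_zero (sub_ne_zero.2 hc.2.1) ?_)
    rw [← sub_neg_eq_add]
    exact sub_ne_zero.2 hc.2.2
  · have h3' : (3 : F) = 0 := by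
      have := FiniteField.cast_card_eq_zero F
      rw [show Fintype.card F = 3 by omega] at this
      exact_mod_cast this
    have h := esymm_two_add univ w w
    have h2 := Multiset.pow_smul_esymm (2 : F) 2 ((univ : Finset ι).val.map w)
    rw [Multiset.map_map] at h2
    simp only [Function.comp_def, smul_eq_mul, two_mul] at h2
    rw [hw.sum_eq_zero hq, hw.sum_mul_self_eq_zero hlam] at h
    linear_combination ((univ : Finset ι).val.map w).esymm 2 * h3' - h2 - h

theorem EquiValued.sum_mul_eq_zero {lam : ℕ} {u v : ι → F} (hu : EquiValued lam u)
    (hv : EquiValued lam v) (huv : EquiValued lam (fun s => u s - v s))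
    (hq : 2 < Fintype.card F) (hlam : (lam : F) = 0 ∨ 3 < Fintype.card F) :
    ∑ s, u s * v s = 0 := by
  have h := esymm_two_add univ (fun s => u s - v s) v
  simp only [sub_add_cancel, sub_mul, sum_sub_distrib] at h
  rw [hu.esymm_two_eq_zero hq hlam, hv.esymm_two_eq_zero hq hlam, huv.esymm_two_eq_zero hq hlam,
    hv.sum_eq_zero hq, hv.sum_mul_self_eq_zero hlam] at h
  linear_combination h

end EquiValued

section Kernel

variable {F ι : Type*} [Field F]

theorem mem_kerSet_iff {C : Set (ι → F)} {x : ι → F} :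
    x ∈ kerSet C ↔ ∀ α : F, ∀ c ∈ C, α • x + c ∈ C := by
  refine ⟨fun h α c hc => ?_, fun h α => Set.Subset.antisymm ?_ fun c hc => ?_⟩
  · exact (h α).subset ⟨c, hc, rfl⟩
  · rintro _ ⟨c, hc, rfl⟩
    exact h α c hc
  · refine ⟨(-α) • x + c, h _ c hc, ?_⟩
    ext i
    simp

/-- The kernel of a code, as a subspace. -/
def kerSubmodule (C : Set (ι → F)) : Submodule F (ι → F) where
  carrier := kerSet C
  zero_mem' := mem_kerSet_iff.2 fun α c hc => by simpa using hc
  add_mem' {x y} hx hy := mem_kerSet_iff.2 fun α c hc => by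
    rw [smul_add, add_assoc]
    exact mem_kerSet_iff.1 hx _ _ (mem_kerSet_iff.1 hy _ _ hc)
  smul_mem' a x hx := mem_kerSet_iff.2 fun α c hc => by
    rw [smul_smul]
    exact mem_kerSet_iff.1 hx _ _ hc

theorem kerDim_eq_finrank (C : Set (ι → F)) :
    kerDim C = Module.finrank F (kerSubmodule C) := by
  rw [kerDim, ← Submodule.span_eq (kerSubmodule C)]
  rfl

theorem kerSet_subset {C : Set (ι → F)} (h0 : 0 ∈ C) : kerSet C ⊆ C := fun x hx => by
  simpa using mem_kerSet_iff.1 hx 1 0 h0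

theorem kerSet_eq_of_coe_submodule {C : Set (ι → F)} (U : Submodule F (ι → F))
    (hU : (U : Set (ι → F)) = C) : kerSet C = C := by
  subst hU
  exact (kerSet_subset U.zero_mem).antisymm fun x hx =>
    mem_kerSet_iff.2 fun α c hc => U.add_mem (U.smul_mem α hx) hc

variable [Fintype F] [Fintype ι]

theorem ncard_submodule (U : Submodule F (ι → F)) :
    (U : Set (ι → F)).ncard = Fintype.card F ^ Module.finrank F U := by
  rw [← Nat.card_coe_set_eq, ← Nat.card_eq_fintype_card]
  exact Module.natCard_eq_pow_finrank

theorem le_rankC {C : Set (ι → F)} {m : ℕ} (hC : C.ncard = Fintype.card F ^ m) :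
    m ≤ rankC C := by
  have h := Set.ncard_le_ncard (Submodule.subset_span (R := F) (s := C)) (Set.toFinite _)
  rw [hC, ncard_submodule] at h
  exact (Nat.pow_le_pow_iff_right Fintype.one_lt_card).1 h

theorem kerDim_eq_of_rankC_eq {C : Set (ι → F)} {m : ℕ} (hC : C.ncard = Fintype.card F ^ m)
    (hr : rankC C = m) : kerDim C = m := by
  have h : C = Submodule.span F C :=
    Set.eq_of_subset_of_ncard_le Submodule.subset_span
      (by rw [ncard_submodule, hC, ← rankC, hr]) (Set.toFinite _)
  rw [kerDim, kerSet_eq_of_coe_submodule _ h.symm]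
  exact hr

theorem rankC_eq_of_kerDim_eq {C : Set (ι → F)} {m : ℕ} (h0 : 0 ∈ C)
    (hC : C.ncard = Fintype.card F ^ m) (hk : kerDim C = m) : rankC C = m := by
  have h : kerSet C = C := Set.eq_of_subset_of_ncard_le (kerSet_subset h0)
    (by
      change C.ncard ≤ (kerSubmodule C : Set (ι → F)).ncard
      rw [ncard_submodule, hC, ← kerDim_eq_finrank, hk]) (Set.toFinite _)
  rw [kerDim, h] at hk
  exact hk

theorem ncard_image_mkQ_mul_le {C : Set (ι → F)} :
    ((kerSubmodule C).mkQ '' C).ncard * Fintype.card F ^ kerDim C ≤ C.ncard := by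
  classical
  rw [kerDim_eq_finrank, ← ncard_submodule, ← Set.ncard_prod]
  have hrep : ∀ y : (ι → F) ⧸ kerSubmodule C, ∃ c, y ∈ (kerSubmodule C).mkQ '' C →
      c ∈ C ∧ (kerSubmodule C).mkQ c = y := fun y => by
    by_cases hy : y ∈ (kerSubmodule C).mkQ '' C
    · obtain ⟨c, hc⟩ := hy
      exact ⟨c, fun _ => hc⟩
    · exact ⟨0, fun h => absurd h hy⟩
  choose rep hrep using hrep
  refine Set.ncard_le_ncard_of_injOn (fun p => p.2 + rep p.1) ?_ ?_ (Set.toFinite _)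
  · rintro ⟨y, x⟩ ⟨hy, hx⟩
    simpa using mem_kerSet_iff.1 hx 1 _ (hrep y hy).1
  · rintro ⟨y, x⟩ ⟨hy, hx⟩ ⟨y', x'⟩ ⟨hy', hx'⟩ h
    dsimp only at hy hy' hx hx' h
    have h1 := congrArg (kerSubmodule C).mkQ h
    have hx0 : (kerSubmodule C).mkQ x = 0 := by simpa using hx
    have hx0' : (kerSubmodule C).mkQ x' = 0 := by simpa using hx'
    rw [map_add, map_add, hx0, hx0', (hrep y hy).2, (hrep y' hy').2, zero_add, zero_add] at h1
    subst h1
    exact Prod.ext rfl (add_right_cancel h)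

theorem rankC_le {C : Set (ι → F)} {m : ℕ} (h0 : 0 ∈ C)
    (hC : C.ncard = Fintype.card F ^ m) (hk : kerDim C ≤ m) :
    rankC C ≤ kerDim C + Fintype.card F ^ (m - kerDim C) - 1 := by
  classical
  set K := kerSubmodule C with hK
  have hcard : (K.mkQ '' C).ncard ≤ Fintype.card F ^ (m - kerDim C) := by
    refine Nat.le_of_mul_le_mul_right (c := Fintype.card F ^ kerDim C) ?_
      (pow_pos Fintype.card_pos _)
    rw [← pow_add, Nat.sub_add_cancel hk, ← hC]
    exact ncard_image_mkQ_mul_le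
  have hle : K ≤ Submodule.span F C := fun x hx => Submodule.subset_span (kerSet_subset h0 hx)
  have hmap : Module.finrank F ((Submodule.span F C).map K.mkQ) + kerDim C = rankC C := by
    have h := (K.mkQ.domRestrict (Submodule.span F C)).finrank_range_add_finrank_ker
    rw [LinearMap.range_domRestrict, LinearMap.ker_domRestrict, Submodule.ker_mkQ] at h
    rw [rankC, kerDim_eq_finrank, ← h]
    congr 1
    exact (Submodule.submoduleOfEquivOfLe hle).finrank_eq.symm
  have h0' : (0 : (ι → F) ⧸ K) ∈ K.mkQ '' C := ⟨0, h0, map_zero _⟩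
  have hspan : Module.finrank F ((Submodule.span F C).map K.mkQ) ≤ (K.mkQ '' C).ncard - 1 := by
    rw [Submodule.map_span, ← Submodule.span_sdiff_singleton_zero,
      ← Set.ncard_sdiff_singleton_of_mem h0', Set.ncard_eq_toFinset_card']
    exact finrank_span_le_card _
  have := Nat.one_le_pow (m - kerDim C) (Fintype.card F) Fintype.card_pos
  omega

omit [Fintype F] in
theorem two_mul_finrank_le_of_isotropic (U : Submodule F (ι → F))
    (hU : ∀ u ∈ U, ∀ v ∈ U, ∑ s, u s * v s = 0) :
    2 * Module.finrank F U ≤ Fintype.card ι := by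
  classical
  have hB : (Matrix.toBilin' (1 : Matrix ι ι F)).Nondegenerate :=
    Matrix.Nondegenerate.toBilin' (Matrix.nondegenerate_of_det_ne_zero (by simp))
  have h := LinearMap.BilinForm.finrank_orthogonal hB U
  have hle : U ≤ (Matrix.toBilin' (1 : Matrix ι ι F)).orthogonal U := fun v hv u hu => by
    simpa [Matrix.toBilin'_apply', dotProduct] using hU u hu v hv
  have h1 := Submodule.finrank_mono hle
  have h2 := Submodule.finrank_le U
  rw [Module.finrank_fintype_fun_eq_card] at h h2
  omega

omit [Fintype F] in
theorem two_mul_rankC_le {C : Set (ι → F)}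
    (hC : ∀ u ∈ C, ∀ v ∈ C, ∑ s, u s * v s = 0) : 2 * rankC C ≤ Fintype.card ι := by
  refine two_mul_finrank_le_of_isotropic _ fun u hu v hv => ?_
  change u ⬝ᵥ v = 0
  induction hu, hv using Submodule.span_induction₂ with
  | mem_mem x y hx hy => exact hC x hx y hy
  | zero_left => simp
  | zero_right => simp
  | add_left x y z _ _ _ h1 h2 => simp [h1, h2]
  | add_right x y z _ _ _ h1 h2 => simp [h1, h2]
  | smul_left c x y _ _ h => simp [h]
  | smul_right c x y _ _ h => simp [h]

omit [Fintype F] in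
theorem rankC_lt_of_sum_eq_zero [Nonempty ι] {C : Set (ι → F)}
    (hC : ∀ u ∈ C, ∑ s, u s = 0) : rankC C < Fintype.card ι := by
  classical
  have hsum : ∀ u ∈ Submodule.span F C, ∑ s, u s = 0 := fun u hu => by
    induction hu using Submodule.span_induction with
    | mem x hx => exact hC x hx
    | zero => simp
    | add x y _ _ h1 h2 => simp [sum_add_distrib, h1, h2]
    | smul a x _ h => simp [← mul_sum, h]
  rw [← Module.finrank_fintype_fun_eq_card (R := F)]
  refine Submodule.finrank_lt fun htop => ?_
  have h := hsum (Pi.single (Classical.arbitrary ι) 1) (htop ▸ Submodule.mem_top)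
  simp at h

end Kernel

section GHCode

variable {F : Type*} [Field F] [Fintype F] [DecidableEq F]

theorem ncard_ghCode {ι : Type*} [Fintype ι] {lam : ℕ} (hlam : 0 < lam) {H : Matrix ι ι F}
    (hGH : IsGH lam H) : (ghCode H).ncard = Fintype.card F * Fintype.card ι := by
  have hrange : ghCode H = Set.range fun p : F × ι => fun s => H p.2 s + p.1 := by
    ext v
    simp [ghCode, eq_comm]
  rw [hrange, ← Set.image_univ, Set.ncard_image_of_injective, Set.ncard_univ,
    Nat.card_eq_fintype_card, Fintype.card_prod]
  rintro ⟨α, i⟩ ⟨β, j⟩ h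
  have hs : ∀ s, H i s + α = H j s + β := congrFun h
  by_cases hij : i = j
  · subst hij
    exact Prod.ext (add_left_cancel (hs i)) rfl
  · have hcard := hGH i j hij (β - α + 1)
    rw [filter_false_of_mem, card_empty] at hcard
    · omega
    · intro s _ h1
      have h0 : (1 : F) = 0 := by linear_combination hs s - h1
      exact one_ne_zero h0

variable {n lam : ℕ} [NeZero n] {H : Matrix (Fin n) (Fin n) F}

omit [Fintype F] [DecidableEq F] in
theorem Normalized.row_zero (hnorm : Normalized H) (s : Fin n) : H 0 s = 0 :=
  hnorm 0 s (Or.inl rfl)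

omit [Fintype F] [DecidableEq F] in
theorem Normalized.zero_mem_ghCode (hnorm : Normalized H) : 0 ∈ ghCode H :=
  ⟨0, 0, funext fun s => by simp [hnorm.row_zero]⟩

theorem IsGH.row_equiValued (hGH : IsGH lam H) (hnorm : Normalized H) {i : Fin n} (hi : i ≠ 0) :
    EquiValued lam (H i) := fun a => by
  simpa [hnorm.row_zero] using hGH i 0 hi a

theorem IsGH.row_sum_eq_zero (hGH : IsGH lam H) (hnorm : Normalized H)
    (hq : 2 < Fintype.card F) (i : Fin n) : ∑ s, H i s = 0 := by
  rcases eq_or_ne i 0 with rfl | hi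
  · simp [hnorm.row_zero]
  · exact (hGH.row_equiValued hnorm hi).sum_eq_zero hq

theorem IsGH.row_mul_sum_eq_zero (hGH : IsGH lam H) (hnorm : Normalized H)
    (hq : 2 < Fintype.card F) (hlam : (lam : F) = 0 ∨ 3 < Fintype.card F) (i j : Fin n) :
    ∑ s, H i s * H j s = 0 := by
  rcases eq_or_ne i 0 with rfl | hi
  · simp [hnorm.row_zero]
  rcases eq_or_ne j 0 with rfl | hj
  · simp [hnorm.row_zero]
  rcases eq_or_ne i j with rfl | hij
  · exact (hGH.row_equiValued hnorm hi).sum_mul_self_eq_zero hlam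
  · exact (hGH.row_equiValued hnorm hi).sum_mul_eq_zero (hGH.row_equiValued hnorm hj)
      (hGH i j hij) hq hlam

theorem IsGH.ghCode_sum_eq_zero (hGH : IsGH lam H) (hnorm : Normalized H)
    (hq : 2 < Fintype.card F) (hn : (n : F) = 0) : ∀ u ∈ ghCode H, ∑ s, u s = 0 := by
  rintro _ ⟨α, i, rfl⟩
  simp [sum_add_distrib, hGH.row_sum_eq_zero hnorm hq, hn]

theorem IsGH.ghCode_isotropic (hGH : IsGH lam H) (hnorm : Normalized H)
    (hq : 2 < Fintype.card F) (hlam : (lam : F) = 0 ∨ 3 < Fintype.card F) (hn : (n : F) = 0) :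
    ∀ u ∈ ghCode H, ∀ v ∈ ghCode H, ∑ s, u s * v s = 0 := by
  rintro _ ⟨α, i, rfl⟩ _ ⟨β, j, rfl⟩
  simp [add_mul, mul_add, sum_add_distrib, ← sum_mul, ← mul_sum, hn,
    hGH.row_sum_eq_zero hnorm hq, hGH.row_mul_sum_eq_zero hnorm hq hlam]

end GHCode

theorem stmt17 {q h : ℕ} {F : Type*} [Field F] [Fintype F] [DecidableEq F]
    (hcard : Fintype.card F = q) (hq : 2 < q) (hh : 1 ≤ h)
    (H : Matrix (Fin (q ^ h)) (Fin (q ^ h)) F)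
    (hGH : IsGH (q ^ (h - 1)) H) (hnorm : Normalized H) :
    (kerDim (ghCode H) = 1 →
      h + 2 ≤ rankC (ghCode H) ∧ rankC (ghCode H) ≤ q ^ h / 2) ∧
    (2 ≤ kerDim (ghCode H) → kerDim (ghCode H) ≤ h →
      h + 2 ≤ rankC (ghCode H) ∧
      rankC (ghCode H) ≤ kerDim (ghCode H) + q ^ (h + 1 - kerDim (ghCode H)) - 1) ∧
    (kerDim (ghCode H) = h + 1 → rankC (ghCode H) = h + 1) := by
  subst hcard
  have hq0 : Fintype.card F ≠ 0 := by omega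
  have : NeZero (Fintype.card F ^ h) := ⟨pow_ne_zero h hq0⟩
  have h0 := hnorm.zero_mem_ghCode
  have hC : (ghCode H).ncard = Fintype.card F ^ (h + 1) := by
    rw [ncard_ghCode (pow_pos (by omega) _) hGH, Fintype.card_fin, pow_succ']
  have hlow : kerDim (ghCode H) ≤ h → h + 2 ≤ rankC (ghCode H) := fun hk => by
    have hle := le_rankC hC
    have hne : rankC (ghCode H) ≠ h + 1 := fun hr => by
      have := kerDim_eq_of_rankC_eq hC hr
      omega
    omega
  have hn : ((Fintype.card F ^ h : ℕ) : F) = 0 := by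
    rw [Nat.cast_pow, FiniteField.cast_card_eq_zero, zero_pow (by omega)]
  refine ⟨fun hk => ?_, fun _ hk => ⟨hlow hk, rankC_le h0 hC (by omega)⟩,
    rankC_eq_of_kerDim_eq h0 hC⟩
  have hlow := hlow (by omega)
  refine ⟨hlow, ?_⟩
  by_cases hlam : ((Fintype.card F ^ (h - 1) : ℕ) : F) = 0 ∨ 3 < Fintype.card F
  · have := two_mul_rankC_le (hGH.ghCode_isotropic hnorm hq hlam hn)
    rw [Fintype.card_fin] at this
    omega
  · push Not at hlam
    have hh1 : h = 1 := by
      by_contra hh1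
      exact hlam.1 (by
        rw [Nat.cast_pow, FiniteField.cast_card_eq_zero, zero_pow (by omega)])
    have hlt := rankC_lt_of_sum_eq_zero (hGH.ghCode_sum_eq_zero hnorm hq hn)
    rw [Fintype.card_fin] at hlt
    have hpow : Fintype.card F ^ h = Fintype.card F := by rw [hh1, pow_one]
    omega
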